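/- Let (h_n, u_n, f_n) be a contradiction sequence and let χ ∈ C_c^∞(ℝ) with χ(z) = 1 for |z| ≤ 1 and χ(z) = 0 for |z| ≥ 2. Set v_n := χ(a/h_n)·u_n. Then ‖a^{1/2}·v_n‖_{L²} + ‖a^{1/2}·h_n∇v_n‖_{L²} = o(h_n) as n → ∞. -/

import Mathlib

open MeasureTheory Complex ComplexConjugate

noncomputable section

/-- Partial derivative `∂u/∂xᵢ` of a complex-valued function on `ℝ^d`. -/
def pd {d : ℕ} (i : Fin d) (u : EuclideanSpace ℝ (Fin d) → ℂ)
    (x : EuclideanSpace ℝ (Fin d)) : ℂ :=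
  fderiv ℝ u x (EuclideanSpace.single i (1 : ℝ))

/-- Laplacian `Δu = ∑ᵢ ∂²u/∂xᵢ²` of a complex-valued function on `ℝ^d`. -/
def lap {d : ℕ} (u : EuclideanSpace ℝ (Fin d) → ℂ)
    (x : EuclideanSpace ℝ (Fin d)) : ℂ :=
  ∑ i : Fin d, pd i (pd i u) x

/-- The semiclassical Kelvin–Voigt operator
`P_h u = -h²Δu - u - i h (∇a·∇u + a Δu)`. -/
def Ph {d : ℕ} (h : ℝ) (a : EuclideanSpace ℝ (Fin d) → ℝ)
    (u : EuclideanSpace ℝ (Fin d) → ℂ) (x : EuclideanSpace ℝ (Fin d)) : ℂ :=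
  -(h ^ 2 : ℂ) * lap u x - u x -
    Complex.I * (h : ℂ) *
      ((∑ i : Fin d, (fderiv ℝ a x (EuclideanSpace.single i (1 : ℝ)) : ℂ) * pd i u x) +
        (a x : ℂ) * lap u x)

open Filter Asymptotics

/-! `P_h u = -div((h² + i h a)∇u) - u`, so pairing with `ū` and taking imaginary parts gives
`h ∫ a|∇u|² ≤ ‖P_h u‖ ‖u‖`, hence `∫ a|∇u|² = o(1)`. Pairing instead with `a ū` and taking real
parts gives `∫ a|u|²` up to `∫ a |P_h u| |u|`, `h² ∫ a|∇u|²` and terms with `∇a`; since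
`|∇a| ≤ K√a`, these are controlled by Young and Cauchy–Schwarz, so `∫ a|u|² = o(h²)`. Both bounds
pass to `χ(a/h)u`, because `h∇(χ(a/h)) = χ'(a/h)∇a` is bounded uniformly in `h`. -/

theorem norm_gradient {F : Type*} [NormedAddCommGroup F] [InnerProductSpace ℝ F]
    [CompleteSpace F] (b : F → ℝ) (x : F) : ‖gradient b x‖ = ‖fderiv ℝ b x‖ :=
  LinearIsometryEquiv.norm_map _ _

theorem abs_mul_norm_gradient_comp_div {F : Type*} [NormedAddCommGroup F] [InnerProductSpace ℝ F]
    [CompleteSpace F] {χ : ℝ → ℝ} {b : F → ℝ} {h : ℝ} {x : F} (hh : h ≠ 0)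
    (hχ : DifferentiableAt ℝ χ (b x / h)) (hb : DifferentiableAt ℝ b x) :
    |h| * ‖gradient (fun y => χ (b y / h)) x‖ = |deriv χ (b x / h)| * ‖gradient b x‖ := by
  have hdiv : HasFDerivAt (fun y => b y / h) (h⁻¹ • fderiv ℝ b x) x := by
    simpa only [div_eq_mul_inv] using hb.hasFDerivAt.mul_const h⁻¹
  have hcomp := (hχ.hasDerivAt.comp_hasFDerivAt x hdiv).fderiv
  simp only [Function.comp_def] at hcomp
  rw [norm_gradient, norm_gradient, hcomp, norm_smul, norm_smul, norm_inv, Real.norm_eq_abs,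
    Real.norm_eq_abs]
  field_simp

theorem integral_norm_mul_norm_le_sqrt_mul_sqrt {α F : Type*} [MeasurableSpace α] {μ : Measure α}
    [NormedAddCommGroup F] {f g : α → F} (hf : MemLp f 2 μ) (hg : MemLp g 2 μ) :
    ∫ x, ‖f x‖ * ‖g x‖ ∂μ ≤ √(∫ x, ‖f x‖ ^ 2 ∂μ) * √(∫ x, ‖g x‖ ^ 2 ∂μ) := by
  simpa [Real.sqrt_eq_rpow] using integral_mul_norm_le_Lp_mul_Lq Real.HolderConjugate.two_two
    (by simpa using hf) (by simpa using hg)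

theorem neg_re_mul_ofReal_mul_le {t C : ℝ} (ht : 0 ≤ t) (htC : t ≤ C) (z w : ℂ) :
    -(z * (t * w)).re ≤ t * ‖w‖ ^ 2 / 4 + C * ‖z‖ ^ 2 :=
  calc -(z * (t * w)).re ≤ ‖z * (t * w)‖ := (neg_le_abs _).trans (abs_re_le_norm _)
    _ = t * (‖z‖ * ‖w‖) := by rw [norm_mul, norm_mul, norm_real, Real.norm_of_nonneg ht]; ring
    _ ≤ t * (‖w‖ ^ 2 / 4 + ‖z‖ ^ 2) := by
        gcongr
        linarith [sq_nonneg (‖w‖ / 2 - ‖z‖), sub_sq (‖w‖ / 2) ‖z‖, div_pow ‖w‖ 2 2]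
    _ ≤ t * ‖w‖ ^ 2 / 4 + C * ‖z‖ ^ 2 := by
        linarith [mul_le_mul_of_nonneg_right htC (sq_nonneg ‖z‖)]

section PartialDerivatives

variable {d : ℕ} {b : EuclideanSpace ℝ (Fin d) → ℝ} {u v w : EuclideanSpace ℝ (Fin d) → ℂ}
  {x : EuclideanSpace ℝ (Fin d)}

theorem pd_conj (i : Fin d) (u : EuclideanSpace ℝ (Fin d) → ℂ) (x : EuclideanSpace ℝ (Fin d)) :
    pd i (fun y => conj (u y)) x = conj (pd i u x) := by
  have h := (conjCLE : ℂ ≃L[ℝ] ℂ).comp_fderiv (f := u) (x := x)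
  exact congrArg (fun L : EuclideanSpace ℝ (Fin d) →L[ℝ] ℂ => L (EuclideanSpace.single i 1)) h

theorem pd_ofReal (i : Fin d) (hb : DifferentiableAt ℝ b x) :
    pd i (fun y => (b y : ℂ)) x = (fderiv ℝ b x (EuclideanSpace.single i (1 : ℝ)) : ℂ) :=
  congrArg (fun L : EuclideanSpace ℝ (Fin d) →L[ℝ] ℂ => L (EuclideanSpace.single i 1))
    (ofRealCLM.hasFDerivAt.comp x hb.hasFDerivAt).fderiv

theorem pd_mul (i : Fin d) (hu : DifferentiableAt ℝ u x) (hv : DifferentiableAt ℝ v x) :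
    pd i (fun y => u y * v y) x = u x * pd i v x + pd i u x * v x := by
  simp [pd, fderiv_fun_mul hu hv, mul_comm (v x)]

theorem contDiff_pd {m n : WithTop ℕ∞} (i : Fin d) (hu : ContDiff ℝ n u) (hmn : m + 1 ≤ n) :
    ContDiff ℝ m (pd i u) :=
  (hu.fderiv_right hmn).clm_apply contDiff_const

theorem continuous_pd (i : Fin d) (hu : ContDiff ℝ 1 u) : Continuous (pd i u) :=
  (contDiff_pd (m := 0) i hu (by simp)).continuous

theorem hasCompactSupport_pd (i : Fin d) (hs : HasCompactSupport u) :
    HasCompactSupport (pd i u) :=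
  hs.fderiv_apply ℝ _

theorem integral_pd_mul_eq_neg (i : Fin d) (hu : ContDiff ℝ 1 u) (hv : ContDiff ℝ 1 v)
    (hs : HasCompactSupport v) :
    ∫ x, pd i u x * v x = -∫ x, u x * pd i v x := by
  have hu' := continuous_pd i hu
  have hv' := continuous_pd i hv
  have huv : Integrable fun x => pd i u x * v x :=
    (hu'.mul hv.continuous).integrable_of_hasCompactSupport hs.mul_left
  have huv' : Integrable fun x => u x * pd i v x :=
    (hu.continuous.mul hv').integrable_of_hasCompactSupport (hasCompactSupport_pd i hs).mul_left
  have h := integral_mul_fderiv_eq_neg_fderiv_mul_of_integrable huv huv'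
    ((hu.continuous.mul hv.continuous).integrable_of_hasCompactSupport hs.mul_left)
    (fun x _ => hu.differentiable one_ne_zero x) (fun x _ => hv.differentiable one_ne_zero x)
  exact (neg_eq_iff_eq_neg.2 h).symm

/-- The product `∇u·∇v = ∑ᵢ ∂ᵢu ∂ᵢv`, bilinear rather than sesquilinear over `ℂ`. -/
def gradDot (u v : EuclideanSpace ℝ (Fin d) → ℂ) (x : EuclideanSpace ℝ (Fin d)) : ℂ :=
  ∑ i : Fin d, pd i u x * pd i v x

/-- The squared length `‖∇u‖²` of the gradient of a complex-valued function. -/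
def gradSq (u : EuclideanSpace ℝ (Fin d) → ℂ) (x : EuclideanSpace ℝ (Fin d)) : ℝ :=
  ∑ i : Fin d, ‖pd i u x‖ ^ 2

theorem gradSq_nonneg (u : EuclideanSpace ℝ (Fin d) → ℂ) (x : EuclideanSpace ℝ (Fin d)) :
    0 ≤ gradSq u x :=
  Finset.sum_nonneg fun _ _ => sq_nonneg _

theorem sum_norm_mul_pd_sq (h : ℝ) (u : EuclideanSpace ℝ (Fin d) → ℂ)
    (x : EuclideanSpace ℝ (Fin d)) :
    ∑ i : Fin d, ‖(h : ℂ) * pd i u x‖ ^ 2 = h ^ 2 * gradSq u x := by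
  simp only [gradSq, Finset.mul_sum, norm_mul, mul_pow, norm_real, Real.norm_eq_abs, sq_abs]

theorem continuous_gradSq (hu : ContDiff ℝ 1 u) : Continuous (gradSq u) :=
  continuous_finsetSum _ fun i _ => (continuous_pd i hu).norm.pow 2

theorem hasCompactSupport_gradSq (hs : HasCompactSupport u) : HasCompactSupport (gradSq u) :=
  .intro hs fun x hx => by simp [gradSq, pd, fderiv_of_notMem_tsupport ℝ hx]

theorem continuous_gradDot (hu : ContDiff ℝ 1 u) (hv : ContDiff ℝ 1 v) :
    Continuous (gradDot u v) :=
  continuous_finsetSum _ fun i _ => (continuous_pd i hu).mul (continuous_pd i hv)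

theorem hasCompactSupport_gradDot (u : EuclideanSpace ℝ (Fin d) → ℂ) (hs : HasCompactSupport v) :
    HasCompactSupport (gradDot u v) :=
  .intro hs fun x hx => by simp [gradDot, pd, fderiv_of_notMem_tsupport ℝ hx]

theorem gradDot_conj (u : EuclideanSpace ℝ (Fin d) → ℂ) (x : EuclideanSpace ℝ (Fin d)) :
    gradDot u (fun y => conj (u y)) x = gradSq u x := by
  simp [gradDot, gradSq, pd_conj, mul_conj']

theorem gradDot_mul (u : EuclideanSpace ℝ (Fin d) → ℂ) (hv : DifferentiableAt ℝ v x)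
    (hw : DifferentiableAt ℝ w x) :
    gradDot u (fun y => v y * w y) x = v x * gradDot u w x + gradDot u v x * w x := by
  simp only [gradDot, pd_mul _ hv hw, Finset.mul_sum, Finset.sum_mul, ← Finset.sum_add_distrib]
  exact Finset.sum_congr rfl fun i _ => by ring

theorem norm_gradDot_le (u v : EuclideanSpace ℝ (Fin d) → ℂ) (x : EuclideanSpace ℝ (Fin d)) :
    ‖gradDot u v x‖ ≤ √(gradSq u x) * √(gradSq v x) :=
  calc ‖gradDot u v x‖ ≤ ∑ i : Fin d, ‖pd i u x‖ * ‖pd i v x‖ := by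
        simpa only [gradDot, norm_mul] using
          norm_sum_le Finset.univ fun i : Fin d => pd i u x * pd i v x
    _ ≤ √(gradSq u x) * √(gradSq v x) := Real.sum_mul_le_sqrt_mul_sqrt _ _ _

theorem gradSq_ofReal (hb : DifferentiableAt ℝ b x) :
    gradSq (fun y => (b y : ℂ)) x = ‖gradient b x‖ ^ 2 := by
  have hpd (i : Fin d) : pd i (fun y => (b y : ℂ)) x = gradient b x i := by
    rw [pd_ofReal i hb, ← inner_gradient_left (𝕜 := ℝ), EuclideanSpace.inner_single_right]
    simp
  simp only [gradSq, hpd, norm_real, EuclideanSpace.norm_sq_eq]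

theorem gradSq_mul_le (hu : DifferentiableAt ℝ u x) (hv : DifferentiableAt ℝ v x) :
    gradSq (fun y => u y * v y) x ≤ 2 * (‖u x‖ ^ 2 * gradSq v x + ‖v x‖ ^ 2 * gradSq u x) :=
  calc gradSq (fun y => u y * v y) x
      ≤ ∑ i : Fin d, 2 * (‖u x‖ ^ 2 * ‖pd i v x‖ ^ 2 + ‖v x‖ ^ 2 * ‖pd i u x‖ ^ 2) := by
        refine Finset.sum_le_sum fun i _ => ?_
        rw [pd_mul i hu hv, mul_comm (pd i u x), ← mul_pow, ← mul_pow, ← norm_mul, ← norm_mul]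
        exact (pow_le_pow_left₀ (norm_nonneg _) (norm_add_le _ _) 2).trans add_sq_le
    _ = 2 * (‖u x‖ ^ 2 * gradSq v x + ‖v x‖ ^ 2 * gradSq u x) := by
        simp only [gradSq, Finset.mul_sum, ← Finset.sum_add_distrib]

end PartialDerivatives

section KelvinVoigt

variable {d : ℕ} {a : EuclideanSpace ℝ (Fin d) → ℝ} {u w : EuclideanSpace ℝ (Fin d) → ℂ}
  {x : EuclideanSpace ℝ (Fin d)} {h : ℝ}

/-- The complex diffusion coefficient `h² + i h a`, for which `P_h u = -div((h² + i h a)∇u) - u`. -/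
def diffusivity (h : ℝ) (a : EuclideanSpace ℝ (Fin d) → ℝ)
    (x : EuclideanSpace ℝ (Fin d)) : ℂ :=
  (h ^ 2 : ℝ) + (h * a x : ℝ) * I

theorem diffusivity_re (h : ℝ) (a : EuclideanSpace ℝ (Fin d) → ℝ)
    (x : EuclideanSpace ℝ (Fin d)) : (diffusivity h a x).re = h ^ 2 := by
  rw [diffusivity, add_re, re_ofReal_mul, I_re, ofReal_re, mul_zero, add_zero]

theorem diffusivity_im (h : ℝ) (a : EuclideanSpace ℝ (Fin d) → ℝ)
    (x : EuclideanSpace ℝ (Fin d)) : (diffusivity h a x).im = h * a x := by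
  rw [diffusivity, add_im, im_ofReal_mul, I_im, ofReal_im, mul_one, zero_add]

theorem contDiff_diffusivity {n : WithTop ℕ∞} (h : ℝ) (ha : ContDiff ℝ n a) :
    ContDiff ℝ n (diffusivity h a) :=
  contDiff_const.add ((ofRealCLM.contDiff.comp (contDiff_const.mul ha)).mul contDiff_const)

theorem norm_diffusivity_le (hh : 0 ≤ h) (hax : 0 ≤ a x) :
    ‖diffusivity h a x‖ ≤ h ^ 2 + h * a x := by
  refine (norm_add_le _ _).trans_eq ?_
  rw [norm_mul, norm_real, norm_real, norm_I, mul_one, Real.norm_of_nonneg (sq_nonneg h),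
    Real.norm_of_nonneg (mul_nonneg hh hax)]

theorem pd_diffusivity (i : Fin d) (h : ℝ) (ha : DifferentiableAt ℝ a x) :
    pd i (diffusivity h a) x = I * h * (fderiv ℝ a x (EuclideanSpace.single i (1 : ℝ)) : ℂ) := by
  have hd := (((ofRealCLM.hasFDerivAt.comp x (ha.hasFDerivAt.const_mul h)).mul_const I).const_add
    ((h ^ 2 : ℝ) : ℂ)).fderiv
  refine (congrArg (fun L : EuclideanSpace ℝ (Fin d) →L[ℝ] ℂ =>
    L (EuclideanSpace.single i 1)) hd).trans ?_
  simp only [ContinuousLinearMap.comp_smulₛₗ, Real.ringHom_apply, smul_apply,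
    ContinuousLinearMap.comp_apply, ofRealCLM_apply, real_smul, smul_eq_mul]
  ring

theorem Ph_eq_neg_div_sub (h : ℝ) (ha : DifferentiableAt ℝ a x)
    (hu : ∀ i, DifferentiableAt ℝ (pd i u) x) :
    Ph h a u x = -∑ i : Fin d, pd i (fun y => diffusivity h a y * pd i u y) x - u x := by
  have hc : DifferentiableAt ℝ (diffusivity h a) x := by
    unfold diffusivity
    fun_prop
  have hpd (i : Fin d) := pd_mul i hc (hu i)
  simp only [hpd, pd_diffusivity _ h ha, Finset.sum_add_distrib, mul_assoc, ← Finset.mul_sum]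
  simp only [Ph, lap, diffusivity]
  push_cast
  ring

theorem continuous_Ph (ha : ContDiff ℝ 1 a) (hu : ContDiff ℝ 2 u) : Continuous (Ph h a u) := by
  have hpd (i : Fin d) : ContDiff ℝ 1 (pd i u) := contDiff_pd i hu one_add_one_eq_two.le
  have hdiv (i : Fin d) : Continuous (pd i fun y => diffusivity h a y * pd i u y) :=
    continuous_pd i ((contDiff_diffusivity h ha).mul (hpd i))
  have hcont := (continuous_finsetSum Finset.univ fun i _ => hdiv i).neg.sub hu.continuous
  exact hcont.congr fun x => (Ph_eq_neg_div_sub h (ha.differentiable one_ne_zero x)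
    fun i => (hpd i).differentiable one_ne_zero x).symm

theorem hasCompactSupport_Ph (hs : HasCompactSupport u) : HasCompactSupport (Ph h a u) := by
  refine .intro hs fun x hx => ?_
  have hpd (i : Fin d) : pd i u x = 0 := by simp [pd, fderiv_of_notMem_tsupport ℝ hx]
  have hpd₂ (i : Fin d) : pd i (pd i u) x = 0 := by
    have hx' : x ∉ tsupport (pd i u) := fun h' => hx (tsupport_fderiv_apply_subset ℝ _ h')
    simp [pd, fderiv_of_notMem_tsupport ℝ hx']
  simp [Ph, lap, hpd, hpd₂, image_eq_zero_of_notMem_tsupport hx]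

theorem integral_Ph_mul (ha : ContDiff ℝ 1 a) (hu : ContDiff ℝ 2 u)
    (hw : ContDiff ℝ 1 w) (hs : HasCompactSupport w) :
    ∫ x, Ph h a u x * w x = ∫ x, (diffusivity h a x * gradDot u w x - u x * w x) := by
  have hpd (i : Fin d) : ContDiff ℝ 1 (pd i u) := contDiff_pd i hu one_add_one_eq_two.le
  have hc := contDiff_diffusivity h ha
  have hflux (i : Fin d) : ContDiff ℝ 1 fun y => diffusivity h a y * pd i u y := hc.mul (hpd i)
  have hdiv (i : Fin d) :
      Integrable fun x => pd i (fun y => diffusivity h a y * pd i u y) x * w x :=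
    ((continuous_pd i (hflux i)).mul hw.continuous).integrable_of_hasCompactSupport hs.mul_left
  have hgrad (i : Fin d) : Integrable fun x => diffusivity h a x * pd i u x * pd i w x :=
    ((hflux i).continuous.mul (continuous_pd i hw)).integrable_of_hasCompactSupport
      (hasCompactSupport_pd i hs).mul_left
  have huw : Integrable fun x => u x * w x :=
    (hu.continuous.mul hw.continuous).integrable_of_hasCompactSupport hs.mul_left
  calc ∫ x, Ph h a u x * w x
      = ∫ x, ((∑ i : Fin d, -(pd i (fun y => diffusivity h a y * pd i u y) x * w x))
          - u x * w x) := by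
        congr with x
        rw [Ph_eq_neg_div_sub h (ha.differentiable one_ne_zero x)
          fun i => (hpd i).differentiable one_ne_zero x, sub_mul, neg_mul, Finset.sum_mul,
          Finset.sum_neg_distrib]
    _ = (∑ i : Fin d, ∫ x, diffusivity h a x * pd i u x * pd i w x) - ∫ x, u x * w x := by
        rw [integral_sub (integrable_finsetSum _ fun i _ => (hdiv i).fun_neg) huw,
          integral_finsetSum _ fun i _ => (hdiv i).fun_neg]
        simp only [integral_neg, integral_pd_mul_eq_neg _ (hflux _) hw hs, neg_neg]
    _ = ∫ x, (diffusivity h a x * gradDot u w x - u x * w x) := by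
        rw [← integral_finsetSum _ fun i _ => hgrad i,
          ← integral_sub (integrable_finsetSum _ fun i _ => hgrad i) huw]
        simp only [gradDot, Finset.mul_sum, mul_assoc]

theorem integrable_Ph_mul (ha : ContDiff ℝ 1 a) (hu : ContDiff ℝ 2 u) (hw : Continuous w)
    (hs : HasCompactSupport w) : Integrable fun x => Ph h a u x * w x :=
  ((continuous_Ph ha hu).mul hw).integrable_of_hasCompactSupport hs.mul_left

theorem integrable_diffusivity_mul_gradDot_sub (ha : ContDiff ℝ 1 a) (hu : ContDiff ℝ 1 u)
    (hw : ContDiff ℝ 1 w) (hs : HasCompactSupport w) :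
    Integrable fun x => diffusivity h a x * gradDot u w x - u x * w x :=
  (((contDiff_diffusivity h ha).continuous.mul
    (continuous_gradDot hu hw)).integrable_of_hasCompactSupport
      (hasCompactSupport_gradDot u hs).mul_left).sub
    ((hu.continuous.mul hw.continuous).integrable_of_hasCompactSupport hs.mul_left)

end KelvinVoigt

section WeightedEstimates

variable {d : ℕ} {a : EuclideanSpace ℝ (Fin d) → ℝ} {h : ℝ}
  {u w : EuclideanSpace ℝ (Fin d) → ℂ}

theorem integrable_mul_gradSq (ha : Continuous a) (hu : ContDiff ℝ 1 u)
    (hs : HasCompactSupport u) : Integrable fun x => a x * gradSq u x :=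
  (ha.mul (continuous_gradSq hu)).integrable_of_hasCompactSupport
    (hasCompactSupport_gradSq hs).mul_left

theorem integrable_mul_norm_sq (ha : Continuous a) (hu : Continuous u)
    (hs : HasCompactSupport u) : Integrable fun x => a x * ‖u x‖ ^ 2 :=
  (ha.mul (hu.norm.pow 2)).integrable_of_hasCompactSupport <|
    .intro hs fun x hx => by simp [image_eq_zero_of_notMem_tsupport hx]

theorem integral_Ph_mul_conj_im (ha : ContDiff ℝ 1 a) (hu : ContDiff ℝ 2 u)
    (hs : HasCompactSupport u) :
    (∫ x, Ph h a u x * conj (u x)).im = h * ∫ x, a x * gradSq u x := by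
  have hu₁ : ContDiff ℝ 1 u := hu.of_le one_le_two
  have hw : ContDiff ℝ 1 fun x => conj (u x) := (conjCLE : ℂ ≃L[ℝ] ℂ).contDiff.comp hu₁
  have hws : HasCompactSupport fun x => conj (u x) := hs.comp_left (map_zero conj)
  have hint : Integrable fun x =>
      diffusivity h a x * gradDot u (fun y => conj (u y)) x - u x * conj (u x) :=
    integrable_diffusivity_mul_gradDot_sub ha hu₁ hw hws
  rw [integral_Ph_mul ha hu hw hws, ← RCLike.im_eq_complex_im, ← integral_im hint,
    ← integral_const_mul]
  simp only [RCLike.im_eq_complex_im, gradDot_conj, mul_conj, sub_im, im_mul_ofReal,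
    diffusivity_im, ofReal_im, sub_zero, mul_assoc]

theorem mul_integral_mul_gradSq_le (ha : ContDiff ℝ 1 a) (hu : ContDiff ℝ 2 u)
    (hs : HasCompactSupport u) :
    h * ∫ x, a x * gradSq u x ≤ √(∫ x, ‖Ph h a u x‖ ^ 2) * √(∫ x, ‖u x‖ ^ 2) :=
  calc h * ∫ x, a x * gradSq u x
      = (∫ x, Ph h a u x * conj (u x)).im := (integral_Ph_mul_conj_im ha hu hs).symm
    _ ≤ ∫ x, ‖Ph h a u x * conj (u x)‖ := (im_le_norm _).trans (norm_integral_le_integral_norm _)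
    _ = ∫ x, ‖Ph h a u x‖ * ‖u x‖ := by simp only [norm_mul, norm_conj]
    _ ≤ √(∫ x, ‖Ph h a u x‖ ^ 2) * √(∫ x, ‖u x‖ ^ 2) :=
      integral_norm_mul_norm_le_sqrt_mul_sqrt
        ((continuous_Ph ha hu).memLp_of_hasCompactSupport (hasCompactSupport_Ph hs))
        (hu.continuous.memLp_of_hasCompactSupport hs)

theorem norm_gradDot_ofReal_le {K : ℝ} {x : EuclideanSpace ℝ (Fin d)}
    (ha : DifferentiableAt ℝ a x) (ha₀ : 0 ≤ a x) (haK : ‖gradient a x‖ ≤ K * √(a x)) :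
    ‖gradDot u (fun y => (a y : ℂ)) x‖ ≤ K * √(a x * gradSq u x) :=
  calc ‖gradDot u (fun y => (a y : ℂ)) x‖ ≤ √(gradSq u x) * ‖gradient a x‖ := by
        simpa only [gradSq_ofReal ha, Real.sqrt_sq (norm_nonneg _)] using
          norm_gradDot_le u (fun y => (a y : ℂ)) x
    _ ≤ √(gradSq u x) * (K * √(a x)) := by gcongr
    _ = K * √(a x * gradSq u x) := by rw [Real.sqrt_mul ha₀]; ring

theorem re_diffusivity_mul_gradDot_le {C K : ℝ} {x : EuclideanSpace ℝ (Fin d)} (hh : 0 ≤ h)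
    (ha : DifferentiableAt ℝ a x) (hu : DifferentiableAt ℝ u x) (ha₀ : 0 ≤ a x) (haC : a x ≤ C)
    (haK : ‖gradient a x‖ ≤ K * √(a x)) :
    (diffusivity h a x * gradDot u (fun y => a y * conj (u y)) x).re ≤
      a x * ‖u x‖ ^ 2 / 4 + h ^ 2 * (1 + K ^ 2 * C) * (a x * gradSq u x) +
        h ^ 2 * K * (√(a x * gradSq u x) * ‖u x‖) := by
  have haℂ : DifferentiableAt ℝ (fun y => (a y : ℂ)) x := ofRealCLM.differentiableAt.comp x ha
  have hconj : DifferentiableAt ℝ (fun y => conj (u y)) x := hu.star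
  have hdot : gradDot u (fun y => a y * conj (u y)) x =
      (a x * gradSq u x : ℝ) + gradDot u (fun y => (a y : ℂ)) x * conj (u x) := by
    rw [gradDot_mul u haℂ hconj, gradDot_conj, ofReal_mul]
  have hs : √(a x * gradSq u x) ^ 2 = a x * gradSq u x :=
    Real.sq_sqrt (mul_nonneg ha₀ (gradSq_nonneg u x))
  set s := √(a x * gradSq u x)
  have hcross : (diffusivity h a x * (gradDot u (fun y => (a y : ℂ)) x * conj (u x))).re ≤
      (h ^ 2 + h * a x) * (K * s * ‖u x‖) := by
    refine (re_le_norm _).trans ?_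
    rw [norm_mul, norm_mul, norm_conj]
    gcongr
    · exact norm_diffusivity_le hh ha₀
    · exact norm_gradDot_ofReal_le ha ha₀ haK
  have hyoung : h * a x * (K * s * ‖u x‖) ≤
      a x * ‖u x‖ ^ 2 / 4 + h ^ 2 * (K ^ 2 * C) * s ^ 2 :=
    calc h * a x * (K * s * ‖u x‖) ≤ a x * (‖u x‖ ^ 2 / 4 + (h * K * s) ^ 2) := by
          linarith [mul_nonneg ha₀ (sq_nonneg (‖u x‖ / 2 - h * K * s))]
      _ ≤ a x * ‖u x‖ ^ 2 / 4 + h ^ 2 * (K ^ 2 * C) * s ^ 2 := by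
          linarith [mul_le_mul_of_nonneg_right haC (sq_nonneg (h * K * s))]
  have hdiag : (diffusivity h a x * ((a x * gradSq u x : ℝ) : ℂ)).re = h ^ 2 * s ^ 2 := by
    rw [re_mul_ofReal, diffusivity_re, hs]
  rw [hdot, mul_add, add_re, hdiag, ← hs]
  linarith

theorem re_weak_form_le {C K : ℝ} {x : EuclideanSpace ℝ (Fin d)} (hh : 0 ≤ h)
    (ha : DifferentiableAt ℝ a x) (hu : DifferentiableAt ℝ u x) (ha₀ : 0 ≤ a x) (haC : a x ≤ C)
    (haK : ‖gradient a x‖ ≤ K * √(a x)) (z : ℂ) :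
    (diffusivity h a x * gradDot u (fun y => a y * conj (u y)) x - u x * (a x * conj (u x)) -
        z * (a x * conj (u x))).re ≤
      C * ‖z‖ ^ 2 + h ^ 2 * (1 + K ^ 2 * C) * (a x * gradSq u x) +
        h ^ 2 * K * (√(a x * gradSq u x) * ‖u x‖) - 1 / 2 * (a x * ‖u x‖ ^ 2) := by
  have henergy := re_diffusivity_mul_gradDot_le hh ha hu ha₀ haC haK
  have hsource := neg_re_mul_ofReal_mul_le ha₀ haC z (conj (u x))
  have hmass : (u x * (a x * conj (u x))).re = a x * ‖u x‖ ^ 2 := by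
    rw [mul_left_comm, mul_conj', ← ofReal_pow, ← ofReal_mul, ofReal_re]
  rw [norm_conj] at hsource
  rw [sub_re, sub_re, hmass]
  linarith

theorem integrable_weak_form (ha : ContDiff ℝ 1 a) (hu : ContDiff ℝ 2 u) (hw : ContDiff ℝ 1 w)
    (hs : HasCompactSupport w) :
    Integrable fun x => diffusivity h a x * gradDot u w x - u x * w x - Ph h a u x * w x :=
  (integrable_diffusivity_mul_gradDot_sub ha (hu.of_le one_le_two) hw hs).sub
    (integrable_Ph_mul ha hu hw.continuous hs)

theorem integral_weak_form_eq_zero (ha : ContDiff ℝ 1 a) (hu : ContDiff ℝ 2 u)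
    (hw : ContDiff ℝ 1 w) (hs : HasCompactSupport w) :
    ∫ x, (diffusivity h a x * gradDot u w x - u x * w x - Ph h a u x * w x) = 0 := by
  rw [integral_sub (integrable_diffusivity_mul_gradDot_sub ha (hu.of_le one_le_two) hw hs)
    (integrable_Ph_mul ha hu hw.continuous hs), integral_Ph_mul ha hu hw hs, sub_self]

theorem memLp_sqrt_mul_gradSq (ha : Continuous a) (hu : ContDiff ℝ 1 u)
    (hs : HasCompactSupport u) : MemLp (fun x => √(a x * gradSq u x)) 2 :=
  (ha.mul (continuous_gradSq hu)).sqrt.memLp_of_hasCompactSupport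
    ((hasCompactSupport_gradSq hs).mul_left.comp_left Real.sqrt_zero)

theorem integral_sqrt_mul_gradSq_mul_norm_le (ha : Continuous a) (ha₀ : ∀ x, 0 ≤ a x)
    (hu : ContDiff ℝ 1 u) (hs : HasCompactSupport u) :
    ∫ x, √(a x * gradSq u x) * ‖u x‖ ≤ √(∫ x, a x * gradSq u x) * √(∫ x, ‖u x‖ ^ 2) := by
  simpa only [norm_norm, Real.norm_of_nonneg (Real.sqrt_nonneg _),
    Real.sq_sqrt (mul_nonneg (ha₀ _) (gradSq_nonneg _ _))] using
    integral_norm_mul_norm_le_sqrt_mul_sqrt (memLp_sqrt_mul_gradSq ha hu hs)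
      (hu.continuous.memLp_of_hasCompactSupport hs).norm

theorem integral_mul_norm_sq_le {C K : ℝ} (hh : 0 ≤ h) (ha : ContDiff ℝ 1 a)
    (ha₀ : ∀ x, 0 ≤ a x) (haC : ∀ x, a x ≤ C) (hK : 0 ≤ K)
    (haK : ∀ x, ‖gradient a x‖ ≤ K * √(a x)) (hu : ContDiff ℝ 2 u) (hs : HasCompactSupport u) :
    ∫ x, a x * ‖u x‖ ^ 2 ≤ 2 * (C * ∫ x, ‖Ph h a u x‖ ^ 2) +
      2 * (h ^ 2 * (1 + K ^ 2 * C) * ∫ x, a x * gradSq u x) +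
      2 * (h ^ 2 * K * (√(∫ x, a x * gradSq u x) * √(∫ x, ‖u x‖ ^ 2))) := by
  have hu₁ : ContDiff ℝ 1 u := hu.of_le one_le_two
  have hw : ContDiff ℝ 1 fun x => a x * conj (u x) :=
    (ofRealCLM.contDiff.comp ha).mul ((conjCLE : ℂ ≃L[ℝ] ℂ).contDiff.comp hu₁)
  have hws : HasCompactSupport fun x => a x * conj (u x) :=
    (hs.comp_left (map_zero conj)).mul_left
  have hweak := integrable_weak_form (h := h) ha hu hw hws
  have hzero := (integral_re hweak).trans
    (by rw [integral_weak_form_eq_zero ha hu hw hws, map_zero])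
  have hcauchy := integral_sqrt_mul_gradSq_mul_norm_le ha.continuous ha₀ hu₁ hs
  have hsource : Integrable fun x => C * ‖Ph h a u x‖ ^ 2 :=
    (((continuous_Ph ha hu).memLp_of_hasCompactSupport
      (hasCompactSupport_Ph hs)).integrable_norm_pow two_ne_zero).const_mul C
  have henergy := (integrable_mul_gradSq ha.continuous hu₁ hs).const_mul (h ^ 2 * (1 + K ^ 2 * C))
  have hmixed : Integrable fun x => √(a x * gradSq u x) * ‖u x‖ :=
    (memLp_sqrt_mul_gradSq ha.continuous hu₁ hs).integrable_mul (q := 2)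
      (hu.continuous.memLp_of_hasCompactSupport hs).norm
  have hcross := hmixed.const_mul (h ^ 2 * K)
  have hmass := (integrable_mul_norm_sq ha.continuous hu.continuous hs).const_mul (1 / 2)
  have hle := integral_mono hweak.re (((hsource.fun_add henergy).fun_add hcross).sub hmass) fun x =>
    re_weak_form_le hh (ha.differentiable one_ne_zero x) (hu₁.differentiable one_ne_zero x) (ha₀ x)
      (haC x) (haK x) (Ph h a u x)
  simp only [Pi.sub_apply] at hle
  rw [hzero, integral_sub ((hsource.fun_add henergy).fun_add hcross) hmass,
    integral_add (hsource.fun_add henergy) hcross, integral_add hsource henergy] at hle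
  simp only [integral_const_mul] at hle
  linarith [mul_le_mul_of_nonneg_left hcauchy (mul_nonneg (sq_nonneg h) hK)]

end WeightedEstimates

section Cutoff

variable {d : ℕ} {a : EuclideanSpace ℝ (Fin d) → ℝ} {u : EuclideanSpace ℝ (Fin d) → ℂ}
  {χ : ℝ → ℝ} {B B' K C h : ℝ}

theorem integral_mul_norm_sq_cutoff_le {φ : EuclideanSpace ℝ (Fin d) → ℝ} (ha : Continuous a)
    (ha₀ : ∀ x, 0 ≤ a x) (hu : Continuous u) (hs : HasCompactSupport u) (hφ : ∀ x, |φ x| ≤ B) :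
    ∫ x, a x * ‖(φ x : ℂ) * u x‖ ^ 2 ≤ B ^ 2 * ∫ x, a x * ‖u x‖ ^ 2 := by
  rw [← integral_const_mul]
  refine integral_mono_of_nonneg (.of_forall fun x => mul_nonneg (ha₀ x) (sq_nonneg _))
    ((integrable_mul_norm_sq ha hu hs).const_mul _) (.of_forall fun x => ?_)
  have hx := ha₀ x
  have hφx : ‖(φ x : ℂ)‖ ≤ B := by simpa using hφ x
  calc a x * ‖(φ x : ℂ) * u x‖ ^ 2 ≤ a x * (B * ‖u x‖) ^ 2 := by
        rw [norm_mul]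
        gcongr
    _ = B ^ 2 * (a x * ‖u x‖ ^ 2) := by ring

theorem gradSq_cutoff_le {x : EuclideanSpace ℝ (Fin d)} (hh : h ≠ 0)
    (ha : DifferentiableAt ℝ a x) (hu : DifferentiableAt ℝ u x)
    (hχ : DifferentiableAt ℝ χ (a x / h)) (hB : |χ (a x / h)| ≤ B)
    (hB' : |deriv χ (a x / h)| ≤ B') :
    h ^ 2 * gradSq (fun y => (χ (a y / h) : ℂ) * u y) x ≤
      2 * (B ^ 2 * h ^ 2 * gradSq u x + B' ^ 2 * ‖gradient a x‖ ^ 2 * ‖u x‖ ^ 2) := by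
  have hφ : DifferentiableAt ℝ (fun y => χ (a y / h)) x := by
    have hdiv : DifferentiableAt ℝ (fun y => a y / h) x := by
      simpa only [div_eq_mul_inv] using ha.mul_const h⁻¹
    exact hχ.comp x hdiv
  have hgrad : h ^ 2 * ‖gradient (fun y => χ (a y / h)) x‖ ^ 2 ≤ B' ^ 2 * ‖gradient a x‖ ^ 2 := by
    rw [← sq_abs h, ← mul_pow, ← mul_pow, abs_mul_norm_gradient_comp_div hh hχ ha]
    gcongr
  have hvalue : ‖(χ (a x / h) : ℂ)‖ ^ 2 ≤ B ^ 2 := by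
    rw [norm_real]
    exact pow_le_pow_left₀ (abs_nonneg _) hB 2
  calc h ^ 2 * gradSq (fun y => (χ (a y / h) : ℂ) * u y) x
      ≤ h ^ 2 * (2 * (‖(χ (a x / h) : ℂ)‖ ^ 2 * gradSq u x +
          ‖u x‖ ^ 2 * ‖gradient (fun y => χ (a y / h)) x‖ ^ 2)) := by
        rw [← gradSq_ofReal hφ]
        gcongr
        exact gradSq_mul_le (ofRealCLM.differentiableAt.comp x hφ) hu
    _ = 2 * (‖(χ (a x / h) : ℂ)‖ ^ 2 * h ^ 2 * gradSq u x +
          h ^ 2 * ‖gradient (fun y => χ (a y / h)) x‖ ^ 2 * ‖u x‖ ^ 2) := by ring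
    _ ≤ 2 * (B ^ 2 * h ^ 2 * gradSq u x + B' ^ 2 * ‖gradient a x‖ ^ 2 * ‖u x‖ ^ 2) := by
        have := gradSq_nonneg u x
        gcongr

theorem integral_mul_gradSq_cutoff_le (hh : h ≠ 0) (ha : ContDiff ℝ 1 a) (ha₀ : ∀ x, 0 ≤ a x)
    (haC : ∀ x, a x ≤ C) (haK : ∀ x, ‖gradient a x‖ ≤ K * √(a x)) (hu : ContDiff ℝ 1 u)
    (hs : HasCompactSupport u) (hχ : Differentiable ℝ χ) (hB : ∀ z, |χ z| ≤ B)
    (hB' : ∀ z, |deriv χ z| ≤ B') :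
    ∫ x, a x * (h ^ 2 * gradSq (fun y => (χ (a y / h) : ℂ) * u y) x) ≤
      2 * (B ^ 2 * (h ^ 2 * ∫ x, a x * gradSq u x) +
        B' ^ 2 * K ^ 2 * C * ∫ x, a x * ‖u x‖ ^ 2) := by
  have hD := ((integrable_mul_gradSq ha.continuous hu hs).const_mul (h ^ 2)).const_mul (B ^ 2)
  have hM := (integrable_mul_norm_sq ha.continuous hu.continuous hs).const_mul (B' ^ 2 * K ^ 2 * C)
  rw [← integral_const_mul, ← integral_const_mul, ← integral_const_mul, ← integral_add hD hM,
    ← integral_const_mul]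
  refine integral_mono_of_nonneg (.of_forall fun x => mul_nonneg (ha₀ x)
    (mul_nonneg (sq_nonneg h) (gradSq_nonneg _ x))) ((hD.add hM).const_mul 2)
    (.of_forall fun x => ?_)
  have hx := ha₀ x
  have hgrad : ‖gradient a x‖ ^ 2 ≤ K ^ 2 * C :=
    calc ‖gradient a x‖ ^ 2 ≤ (K * √(a x)) ^ 2 := pow_le_pow_left₀ (norm_nonneg _) (haK x) 2
      _ = K ^ 2 * a x := by rw [mul_pow, Real.sq_sqrt hx]
      _ ≤ K ^ 2 * C := by gcongr; exact haC x
  calc a x * (h ^ 2 * gradSq (fun y => (χ (a y / h) : ℂ) * u y) x)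
      ≤ a x * (2 * (B ^ 2 * h ^ 2 * gradSq u x + B' ^ 2 * (K ^ 2 * C) * ‖u x‖ ^ 2)) := by
        refine mul_le_mul_of_nonneg_left ((gradSq_cutoff_le hh (ha.differentiable one_ne_zero x)
          (hu.differentiable one_ne_zero x) (hχ _) (hB _) (hB' _)).trans ?_) hx
        gcongr
    _ = 2 * (B ^ 2 * (h ^ 2 * (a x * gradSq u x)) +
          B' ^ 2 * K ^ 2 * C * (a x * ‖u x‖ ^ 2)) := by ring

end Cutoff

section SemiclassicalLimit

variable {d : ℕ} {ι : Type*} {l : Filter ι} {a : EuclideanSpace ℝ (Fin d) → ℝ} {C K : ℝ}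
  {h : ι → ℝ} {u : ι → EuclideanSpace ℝ (Fin d) → ℂ}

theorem isLittleO_integral_mul_gradSq (ha : ContDiff ℝ 1 a) (ha₀ : ∀ x, 0 ≤ a x)
    (hh : ∀ n, 0 < h n) (hu : ∀ n, ContDiff ℝ 2 (u n)) (hs : ∀ n, HasCompactSupport (u n))
    (hbdd : (fun n => ∫ x, ‖u n x‖ ^ 2) =O[l] fun _ => (1 : ℝ))
    (hf : (fun n => √(∫ x, ‖Ph (h n) a (u n) x‖ ^ 2)) =o[l] h) :
    (fun n => ∫ x, a x * gradSq (u n) x) =o[l] fun _ => (1 : ℝ) := by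
  have hfu : (fun n => √(∫ x, ‖Ph (h n) a (u n) x‖ ^ 2) * √(∫ x, ‖u n x‖ ^ 2)) =o[l] h := by
    simpa using hf.mul_isBigO (hbdd.sqrt (.of_forall fun _ => zero_le_one))
  have hhG : (fun n => h n * ∫ x, a x * gradSq (u n) x) =o[l] h := by
    refine IsBigO.trans_isLittleO (.of_norm_le fun n => ?_) hfu
    rw [Real.norm_of_nonneg (mul_nonneg (hh n).le
      (integral_nonneg fun x => mul_nonneg (ha₀ x) (gradSq_nonneg _ x)))]
    exact mul_integral_mul_gradSq_le ha (hu n) (hs n)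
  refine ((isBigO_refl (fun n => (h n)⁻¹) l).mul_isLittleO hhG).congr (fun n => ?_) fun n => ?_
  · exact inv_mul_cancel_left₀ (hh n).ne' _
  · exact inv_mul_cancel₀ (hh n).ne'

theorem isLittleO_integral_mul_norm_sq (ha : ContDiff ℝ 1 a) (ha₀ : ∀ x, 0 ≤ a x)
    (haC : ∀ x, a x ≤ C) (hK : 0 ≤ K) (haK : ∀ x, ‖gradient a x‖ ≤ K * √(a x))
    (hh : ∀ n, 0 < h n) (hu : ∀ n, ContDiff ℝ 2 (u n)) (hs : ∀ n, HasCompactSupport (u n))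
    (hbdd : (fun n => ∫ x, ‖u n x‖ ^ 2) =O[l] fun _ => (1 : ℝ))
    (hf : (fun n => √(∫ x, ‖Ph (h n) a (u n) x‖ ^ 2)) =o[l] h) :
    (fun n => ∫ x, a x * ‖u n x‖ ^ 2) =o[l] fun n => h n ^ 2 := by
  have hone : ∀ᶠ _ in l, (0 : ℝ) ≤ 1 := .of_forall fun _ => zero_le_one
  have hG := isLittleO_integral_mul_gradSq ha ha₀ hh hu hs hbdd hf
  have hP : (fun n => ∫ x, ‖Ph (h n) a (u n) x‖ ^ 2) =o[l] fun n => h n ^ 2 :=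
    (hf.pow two_pos).congr_left fun n => Real.sq_sqrt (integral_nonneg fun x => sq_nonneg _)
  have hhG (c : ℝ) :
      (fun n => h n ^ 2 * c * ∫ x, a x * gradSq (u n) x) =o[l] fun n => h n ^ 2 := by
    simpa only [mul_assoc, mul_left_comm c, mul_one] using
      (isBigO_refl (fun n => h n ^ 2) l).mul_isLittleO (hG.const_mul_left c)
  have hcross : (fun n => h n ^ 2 * K * (√(∫ x, a x * gradSq (u n) x) * √(∫ x, ‖u n x‖ ^ 2)))
      =o[l] fun n => h n ^ 2 := by
    simpa only [mul_assoc, Real.sqrt_one, mul_one] using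
      (isBigO_refl (fun n => h n ^ 2) l).mul_isLittleO
        (((hG.sqrt hone).mul_isBigO (hbdd.sqrt hone)).const_mul_left K)
  refine IsBigO.trans_isLittleO (.of_norm_le fun n => ?_)
    ((((hP.const_mul_left C).const_mul_left 2).add
      ((hhG (1 + K ^ 2 * C)).const_mul_left 2)).add (hcross.const_mul_left 2))
  rw [Real.norm_of_nonneg (integral_nonneg fun x => mul_nonneg (ha₀ x) (sq_nonneg _))]
  exact integral_mul_norm_sq_le (hh n).le ha ha₀ haC hK haK (hu n) (hs n)

theorem stmt_8_general {χ : ℝ → ℝ} {B B' : ℝ} (ha : ContDiff ℝ 1 a) (ha₀ : ∀ x, 0 ≤ a x)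
    (haC : ∀ x, a x ≤ C) (haK : ∀ x, ‖gradient a x‖ ≤ K * √(a x)) (hh : ∀ n, 0 < h n)
    (hu : ∀ n, ContDiff ℝ 2 (u n)) (hs : ∀ n, HasCompactSupport (u n))
    (hbdd : (fun n => ∫ x, ‖u n x‖ ^ 2) =O[l] fun _ => (1 : ℝ))
    (hf : (fun n => √(∫ x, ‖Ph (h n) a (u n) x‖ ^ 2)) =o[l] h)
    (hχ : Differentiable ℝ χ) (hB : ∀ z, |χ z| ≤ B) (hB' : ∀ z, |deriv χ z| ≤ B') :
    (fun n => √(∫ x, a x * ‖((χ (a x / h n) : ℝ) : ℂ) * u n x‖ ^ 2) +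
      √(∫ x, a x * ∑ i : Fin d,
        ‖(h n : ℂ) * pd i (fun y => ((χ (a y / h n) : ℝ) : ℂ) * u n y) x‖ ^ 2)) =o[l] h := by
  have haK' (x) : ‖gradient a x‖ ≤ |K| * √(a x) :=
    (haK x).trans (mul_le_mul_of_nonneg_right (le_abs_self K) (Real.sqrt_nonneg _))
  have hM := isLittleO_integral_mul_norm_sq ha ha₀ haC (abs_nonneg K) haK' hh hu hs hbdd hf
  have hD : (fun n => h n ^ 2 * ∫ x, a x * gradSq (u n) x) =o[l] fun n => h n ^ 2 := by
    simpa using (isBigO_refl (fun n => h n ^ 2) l).mul_isLittleO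
      (isLittleO_integral_mul_gradSq ha ha₀ hh hu hs hbdd hf)
  have hsqrt {X : ι → ℝ} (hX : X =o[l] fun n => h n ^ 2) : (fun n => √(X n)) =o[l] h :=
    (hX.sqrt (.of_forall fun n => sq_nonneg _)).congr_right fun n => Real.sqrt_sq (hh n).le
  simp only [sum_norm_mul_pd_sq]
  have hvalue := hM.const_mul_left (B ^ 2)
  have hgrad :=
    ((hD.const_mul_left (B ^ 2)).add (hM.const_mul_left (B' ^ 2 * K ^ 2 * C))).const_mul_left 2
  refine (hsqrt (IsBigO.trans_isLittleO (.of_norm_le fun n => ?_) hvalue)).add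
    (hsqrt (IsBigO.trans_isLittleO (.of_norm_le fun n => ?_) hgrad))
  · rw [Real.norm_of_nonneg (integral_nonneg fun x => mul_nonneg (ha₀ x) (sq_nonneg _))]
    exact integral_mul_norm_sq_cutoff_le ha.continuous ha₀ (hu n).continuous (hs n) fun _ => hB _
  · rw [Real.norm_of_nonneg (integral_nonneg fun x => mul_nonneg (ha₀ x)
      (mul_nonneg (sq_nonneg _) (gradSq_nonneg _ x)))]
    exact integral_mul_gradSq_cutoff_le (hh n).ne' ha ha₀ haC haK ((hu n).of_le one_le_two) (hs n)
      hχ hB hB'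

end SemiclassicalLimit

/-- **Lemma 3.4, second part, of the paper**: for a contradiction sequence and a cutoff
`χ` as above, the truncation `v_n = χ(a/h_n) u_n` to the region `a ≲ h_n` satisfies
`‖a^{1/2}v_n‖_{L²} + ‖a^{1/2}h_n∇v_n‖_{L²} = o(h_n)`. -/
theorem stmt_8 (d : ℕ) (hd : 1 ≤ d)
    (a : EuclideanSpace ℝ (Fin d) → ℝ) (K : ℝ)
    (haC1 : ContDiff ℝ 1 a) (habd : ∃ C, ∀ x, a x ≤ C) (hapos : ∀ x, 0 ≤ a x)
    (haK : ∀ x, ‖gradient a x‖ ≤ K * Real.sqrt (a x))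
    (h : ℕ → ℝ) (u : ℕ → EuclideanSpace ℝ (Fin d) → ℂ)
    (hhpos : ∀ n, 0 < h n) (hh0 : Tendsto h atTop (nhds 0))
    (husm : ∀ n, ContDiff ℝ (⊤ : ℕ∞) (u n)) (husupp : ∀ n, HasCompactSupport (u n))
    (hunorm : ∀ n, (∫ x, ‖u n x‖ ^ 2) = 1)
    (hf : (fun n => Real.sqrt (∫ x, ‖Ph (h n) a (u n) x‖ ^ 2)) =o[atTop] h)
    (χ : ℝ → ℝ) (hχ : ContDiff ℝ (⊤ : ℕ∞) χ) (hχsupp : HasCompactSupport χ)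
    (hχ1 : ∀ z : ℝ, |z| ≤ 1 → χ z = 1) (hχ0 : ∀ z : ℝ, 2 ≤ |z| → χ z = 0) :
    (fun n => Real.sqrt (∫ x, a x * ‖((χ (a x / h n) : ℝ) : ℂ) * u n x‖ ^ 2)
      + Real.sqrt (∫ x, a x * ∑ i : Fin d,
          ‖(h n : ℂ) * pd i (fun y => ((χ (a y / h n) : ℝ) : ℂ) * u n y) x‖ ^ 2))
    =o[atTop] h := by
  obtain ⟨C, haC⟩ := habd
  obtain ⟨B, hB⟩ := hχsupp.exists_bound_of_continuous hχ.continuous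
  obtain ⟨B', hB'⟩ := hχsupp.deriv.exists_bound_of_continuous (hχ.continuous_deriv (by simp))
  exact stmt_8_general haC1 hapos haC haK hhpos (fun n => contDiff_infty.1 (husm n) 2) husupp
    (by simp only [hunorm]; exact isBigO_refl _ _) hf (hχ.differentiable (by simp)) hB hB'

end
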